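/- arXiv:math/0403339 — 2 statements merged into one kernel-verified Lean document; each statement's English description precedes it below -/
import Mathlib

section
/- Let G be a finite simple graph with n vertices, let r ≥ 2 be an integer, and let t, x_1, …, x_{r-1} be complex numbers. Then Σ_{f : E → Fin r} Π_{v ∈ V} w_v(f) = Σ_{λ, |λ| ≤ n} t^{n−|λ|} p_λ(x_1, …, x_{r−1}) N_λ(G), where the sum on the right runs over all partitions λ of weight at most n. -/
open scoped Classical

/-- The finset of edges of `G` incident to the vertex `v`. -/
noncomputable def incidentEdges {V : Type*} [Fintype V] [DecidableEq V]
    (G : SimpleGraph V) (v : V) : Finset G.edgeSet :=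
  Finset.univ.filter (fun e => v ∈ (e : Sym2 V))

/-- The local weight `w_v(f)`: colors are the elements of `Fin (m+1)`, the last color
playing the role of the color `r = m+1`.  The weight is `t` if every edge incident to `v`
has the last color (in particular if `v` is isolated), `x i` if the multiset of colors of
the edges incident to `v` consists of exactly two copies of the color `i` (with
`i ∈ {1, …, r-1}`) together with `deg v - 2` copies of the last color, and `0` otherwise. -/
noncomputable def localWeight {V : Type*} [Fintype V] [DecidableEq V]
    (G : SimpleGraph V) {m : ℕ} (t : ℂ) (x : Fin m → ℂ)
    (f : G.edgeSet → Fin (m + 1)) (v : V) : ℂ :=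
  if ∀ e ∈ incidentEdges G v, f e = Fin.last m then t
  else ∑ i : Fin m,
    if ((incidentEdges G v).filter (fun e => f e = i.castSucc)).card = 2 ∧
        (∀ e ∈ incidentEdges G v, f e = i.castSucc ∨ f e = Fin.last m)
    then x i else 0

/-- A (multi)cycle in `G`: a set of edges such that every vertex incident to an edge of
the set is incident to exactly two edges of the set.  It need not be connected. -/
def IsMultiCycle {V : Type*} [Fintype V] [DecidableEq V]
    (G : SimpleGraph V) (C : Finset G.edgeSet) : Prop :=
  ∀ v : V, (∃ e ∈ C, v ∈ (e : Sym2 V)) →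
    (C.filter (fun e => v ∈ (e : Sym2 V))).card = 2

/-- The graph on `V` whose edges are the edges of `C`. -/
def cycleGraph {V : Type*} [Fintype V] [DecidableEq V]
    (G : SimpleGraph V) (C : Finset G.edgeSet) : SimpleGraph V :=
  SimpleGraph.fromEdgeSet (↑(C.image (fun e => (e : Sym2 V))))

/-- The number of edges of `C` lying in the connected component `K` of `cycleGraph G C`. -/
noncomputable def componentEdgeCount {V : Type*} [Fintype V] [DecidableEq V]
    (G : SimpleGraph V) (C : Finset G.edgeSet)
    (K : (cycleGraph G C).ConnectedComponent) : ℕ :=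
  (C.filter (fun e => ∀ v ∈ (e : Sym2 V),
    (cycleGraph G C).connectedComponentMk v = K)).card

/-- The type of the cycle `C`: the multiset recording the numbers of edges of the
connected components of `C`. -/
noncomputable def cycleType {V : Type*} [Fintype V] [DecidableEq V]
    (G : SimpleGraph V) (C : Finset G.edgeSet) : Multiset ℕ :=
  Multiset.filter (· ≠ 0)
    ((Finset.univ : Finset (cycleGraph G C).ConnectedComponent).val.map
      (componentEdgeCount G C))

/-- `N_λ(G)`: the number of cycles of type `λ` in `G`. -/
noncomputable def cycleCount {V : Type*} [Fintype V] [DecidableEq V]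
    (G : SimpleGraph V) {k : ℕ} (lam : Nat.Partition k) : ℕ :=
  (Finset.univ.filter (fun C : Finset G.edgeSet =>
    IsMultiCycle G C ∧ cycleType G C = lam.parts)).card

namespace ZografAux

variable {V : Type*} [Fintype V] [DecidableEq V] (G : SimpleGraph V)

lemma lift_eq_image (C : Finset G.edgeSet) :
    (do let a ← C; pure (a : Sym2 V) : Finset (Sym2 V)) =
      Finset.image (fun e : G.edgeSet => (e : Sym2 V)) C := by
  ext e
  simp [Finset.bind_def, Finset.mem_sup]

lemma card_lift_filter (C : Finset G.edgeSet) (P : Sym2 V → Prop) [DecidablePred P]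
    [DecidablePred (fun e : G.edgeSet => P e)] :
    ((do let a ← C; pure (a : Sym2 V) : Finset (Sym2 V)).filter P).card =
      (C.filter (fun e : G.edgeSet => P e)).card := by
  rw [lift_eq_image, Finset.filter_image, Finset.card_image_of_injective _ Subtype.val_injective]
  congr!

lemma isMultiCycle_iff (C : Finset G.edgeSet) : IsMultiCycle G C ↔
    ∀ v : V, (∃ e ∈ C, v ∈ (e : Sym2 V)) →
      (C.filter (fun e : G.edgeSet => v ∈ (e : Sym2 V))).card = 2 := by
  unfold IsMultiCycle
  refine forall_congr' fun v => imp_congr_right fun _ => ?_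
  rw [card_lift_filter G C (fun e => v ∈ e)]

lemma componentEdgeCount_eq (C : Finset G.edgeSet)
    (K : (cycleGraph G C).ConnectedComponent) : componentEdgeCount G C K =
    (C.filter (fun e : G.edgeSet => ∀ v ∈ (e : Sym2 V),
      (cycleGraph G C).connectedComponentMk v = K)).card := by
  unfold componentEdgeCount
  exact card_lift_filter G C (fun e => ∀ v ∈ e, (cycleGraph G C).connectedComponentMk v = K)

/-- The component of an edge. -/
noncomputable def ecomp (C : Finset G.edgeSet) (e : G.edgeSet) :
    (cycleGraph G C).ConnectedComponent :=
  (cycleGraph G C).connectedComponentMk (e : Sym2 V).out.1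

/-- Number of vertices of a component. -/
noncomputable def vcount (C : Finset G.edgeSet)
    (K : (cycleGraph G C).ConnectedComponent) : ℕ :=
  (Finset.univ.filter (fun v => (cycleGraph G C).connectedComponentMk v = K)).card

/-- The edge coloring induced by a coloring of components. -/
noncomputable def colorOf {m : ℕ} (C : Finset G.edgeSet)
    (c : (cycleGraph G C).ConnectedComponent → Fin (m + 1)) : G.edgeSet → Fin (m + 1) :=
  fun e => if e ∈ C then c (ecomp G C e) else Fin.last m

/-- Component weights. -/
noncomputable def compWeight {m : ℕ} (t : ℂ) (x : Fin m → ℂ) (C : Finset G.edgeSet)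
    (K : (cycleGraph G C).ConnectedComponent) (i : Fin (m + 1)) : ℂ :=
  if componentEdgeCount G C K = 0 then (if i = Fin.last m then t ^ vcount G C K else 0)
  else Fin.lastCases (motive := fun _ => ℂ) 0 (fun j => x j ^ componentEdgeCount G C K) i

lemma mk_eq_of_mem {C : Finset G.edgeSet} {e : G.edgeSet} (he : e ∈ C) {u v : V}
    (hu : u ∈ (e : Sym2 V)) (hv : v ∈ (e : Sym2 V)) :
    (cycleGraph G C).connectedComponentMk u = (cycleGraph G C).connectedComponentMk v := by
  by_cases h : u = v
  · rw [h]
  · rw [SimpleGraph.ConnectedComponent.eq]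
    apply SimpleGraph.Adj.reachable
    have : (e : Sym2 V) = s(u, v) := (Sym2.mem_and_mem_iff h).1 ⟨hu, hv⟩
    simp only [cycleGraph, SimpleGraph.fromEdgeSet_adj]
    refine ⟨?_, h⟩
    rw [← this]
    simpa using he

lemma ecomp_eq {C : Finset G.edgeSet} {e : G.edgeSet} (he : e ∈ C) {v : V}
    (hv : v ∈ (e : Sym2 V)) :
    ecomp G C e = (cycleGraph G C).connectedComponentMk v :=
  mk_eq_of_mem G he (Sym2.out_fst_mem _) hv

lemma count_eq (C : Finset G.edgeSet) (K : (cycleGraph G C).ConnectedComponent) :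
    componentEdgeCount G C K = (C.filter (fun e : G.edgeSet => ecomp G C e = K)).card := by
  rw [componentEdgeCount_eq]
  congr 1
  apply Finset.filter_congr
  intro e he
  constructor
  · intro h
    exact h _ (Sym2.out_fst_mem _)
  · rintro h v hv
    rw [← h, ecomp_eq G he hv]

lemma sum_count (C : Finset G.edgeSet) :
    ∑ K, componentEdgeCount G C K = C.card := by
  simp_rw [count_eq]
  exact (Finset.card_eq_sum_card_fiberwise (fun e _ => Finset.mem_univ _)).symm

lemma sum_vcount (C : Finset G.edgeSet) :
    ∑ K, vcount G C K = Fintype.card V := by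
  unfold vcount
  exact (Finset.card_eq_sum_card_fiberwise (fun e _ => Finset.mem_univ _)).symm

lemma exists_edge_of_adj {C : Finset G.edgeSet} {u v : V} (h : (cycleGraph G C).Adj u v) :
    ∃ e ∈ C, (e : Sym2 V) = s(u, v) := by
  simp only [cycleGraph, SimpleGraph.fromEdgeSet_adj] at h
  simpa using h.1

lemma exists_edge_of_reachable {C : Finset G.edgeSet} {u v : V}
    (h : (cycleGraph G C).Reachable u v) (hv : ∃ e ∈ C, v ∈ (e : Sym2 V)) :
    ∃ e ∈ C, u ∈ (e : Sym2 V) := by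
  obtain ⟨p⟩ := h
  cases p with
  | nil => exact hv
  | cons h p =>
    obtain ⟨e, he, h'⟩ := exists_edge_of_adj G h
    exact ⟨e, he, by simp [h']⟩

lemma count_ne_zero {C : Finset G.edgeSet} (v : V) :
    componentEdgeCount G C ((cycleGraph G C).connectedComponentMk v) ≠ 0 ↔
      ∃ e ∈ C, v ∈ (e : Sym2 V) := by
  rw [count_eq, Finset.card_ne_zero]
  constructor
  · rintro ⟨e, he⟩
    rw [Finset.mem_filter] at he
    obtain ⟨he, h⟩ := he
    refine exists_edge_of_reachable G (SimpleGraph.ConnectedComponent.eq.1 h).symm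
      ⟨e, he, Sym2.out_fst_mem _⟩
  · rintro ⟨e, he, hv⟩
    exact ⟨e, Finset.mem_filter.2 ⟨he, ecomp_eq G he hv⟩⟩

lemma vcount_eq {C : Finset G.edgeSet} (hC : IsMultiCycle G C)
    (K : (cycleGraph G C).ConnectedComponent) (hK : componentEdgeCount G C K ≠ 0) :
    vcount G C K = componentEdgeCount G C K := by
  rw [count_eq, vcount]
  have key := Finset.card_mul_eq_card_mul (m := 2) (n := 2)
    (s := Finset.univ.filter (fun v => (cycleGraph G C).connectedComponentMk v = K))
    (t := C.filter (fun e : G.edgeSet => ecomp G C e = K))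
    (fun (v : V) (e : G.edgeSet) => v ∈ (e : Sym2 V)) ?_ ?_
  · omega
  · intro v hv
    rw [Finset.mem_filter] at hv
    have h1 := (count_ne_zero G v).1 (by rw [hv.2]; exact hK)
    rw [← (isMultiCycle_iff G C).1 hC v h1]
    congr 1
    ext e
    simp only [Finset.mem_bipartiteAbove, Finset.mem_filter]
    constructor
    · tauto
    · rintro ⟨he, h⟩
      exact ⟨⟨he, by rw [ecomp_eq G he h, hv.2]⟩, h⟩
  · intro e he
    rw [Finset.mem_filter] at he
    have hd : ¬ (e : Sym2 V).IsDiag := G.not_isDiag_of_mem_edgeSet e.2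
    rw [← Sym2.card_toFinset_of_not_isDiag _ hd]
    congr 1
    ext v
    simp only [Finset.mem_bipartiteBelow, Finset.mem_filter, Finset.mem_univ, true_and,
      Sym2.mem_toFinset]
    constructor
    · tauto
    · intro h
      exact ⟨by rw [← ecomp_eq G he.1 h, he.2], h⟩

lemma sum_compWeight {m : ℕ} (t : ℂ) (x : Fin m → ℂ) (C : Finset G.edgeSet)
    (K : (cycleGraph G C).ConnectedComponent) :
    ∑ i, compWeight G t x C K i =
      if componentEdgeCount G C K = 0 then t ^ vcount G C K
      else ∑ i, x i ^ componentEdgeCount G C K := by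
  unfold compWeight
  split_ifs with h
  · simp
  · rw [Fin.sum_univ_castSucc]
    simp

lemma card_add {C : Finset G.edgeSet} (hC : IsMultiCycle G C) :
    (∑ K, if componentEdgeCount G C K = 0 then vcount G C K else 0) + C.card
      = Fintype.card V := by
  rw [← sum_vcount G C, ← sum_count G C, ← Finset.sum_add_distrib]
  apply Finset.sum_congr rfl
  intro K _
  split_ifs with h
  · omega
  · rw [vcount_eq G hC K h]; omega

lemma cycleType_sum (C : Finset G.edgeSet) : (cycleType G C).sum = C.card := by
  rw [← sum_count G C, cycleType]
  rw [Finset.sum]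
  generalize (Finset.univ.val.map (componentEdgeCount G C)) = s
  induction s using Multiset.induction_on with
  | empty => simp
  | cons a s ih =>
    by_cases h : a = 0
    · simp [h, ih]
    · simp [h, ih]

lemma prod_filter_ne {s : Multiset ℕ} (g : ℕ → ℂ) :
    ((s.filter (· ≠ 0)).map g).prod = (s.map (fun k => if k = 0 then 1 else g k)).prod := by
  induction s using Multiset.induction_on with
  | empty => simp
  | cons a s ih =>
    by_cases h : a = 0
    · simp [h] at ih ⊢
      exact ih
    · simp [h] at ih ⊢
      exact Or.inl ih

lemma sum_prod_compWeight {m : ℕ} (t : ℂ) (x : Fin m → ℂ) {C : Finset G.edgeSet}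
    (hC : IsMultiCycle G C) :
    ∑ c : (cycleGraph G C).ConnectedComponent → Fin (m + 1),
      ∏ K, compWeight G t x C K (c K) =
    t ^ (Fintype.card V - C.card) *
      ((cycleType G C).map (fun j => ∑ i : Fin m, x i ^ j)).prod := by
  rw [← Fintype.prod_sum]
  have h1 : Fintype.card V - C.card =
      ∑ K, if componentEdgeCount G C K = 0 then vcount G C K else 0 := by
    have := card_add G hC
    omega
  rw [h1, cycleType, prod_filter_ne, Multiset.map_map, ← Finset.prod_pow_eq_pow_sum]
  change _ = _ * ∏ K, _
  rw [← Finset.prod_mul_distrib]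
  apply Finset.prod_congr rfl
  intro K _
  rw [sum_compWeight]
  simp only [Function.comp]
  split_ifs <;> simp

/-- Nonvanishing local condition. -/
lemma localWeight_ne_zero {m : ℕ} {t : ℂ} {x : Fin m → ℂ}
    {f : G.edgeSet → Fin (m + 1)} {v : V} (h : localWeight G t x f v ≠ 0)
    {C : Finset G.edgeSet} (hf : ∀ e, e ∈ C ↔ f e ≠ Fin.last m)
    (hv : ∃ e ∈ C, v ∈ (e : Sym2 V)) :
    (C.filter (fun e : G.edgeSet => v ∈ (e : Sym2 V))).card = 2 ∧
    ∀ e ∈ C, v ∈ (e : Sym2 V) → ∀ e' ∈ C, v ∈ (e' : Sym2 V) → f e = f e' := by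
  obtain ⟨e₀, he₀, hv₀⟩ := hv
  have hn : ¬ ∀ e ∈ incidentEdges G v, f e = Fin.last m := by
    intro h'
    exact (hf e₀).1 he₀ (h' e₀ (by simp [incidentEdges, hv₀]))
  rw [localWeight, if_neg hn] at h
  obtain ⟨i, _, hi⟩ := Finset.exists_ne_zero_of_sum_ne_zero h
  have hi' := (ite_ne_right_iff.1 hi).1
  obtain ⟨h2, hall⟩ := hi'
  have hcol : ∀ e ∈ C, v ∈ (e : Sym2 V) → f e = i.castSucc := by
    intro e he hve
    exact (hall e (by simp [incidentEdges, hve])).resolve_right ((hf e).1 he)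
  refine ⟨?_, ?_⟩
  · rw [← h2]
    congr 1
    ext e
    simp only [Finset.mem_filter, incidentEdges, Finset.mem_univ, true_and]
    constructor
    · rintro ⟨he, hve⟩
      exact ⟨hve, hcol e he hve⟩
    · rintro ⟨hve, he⟩
      refine ⟨(hf e).2 ?_, hve⟩
      rw [he]
      exact (Fin.castSucc_lt_last i).ne
  · intro e he hve e' he' hve'
    rw [hcol e he hve, hcol e' he' hve']

lemma const_of_walk {α : Type*} {f : G.edgeSet → α} {C : Finset G.edgeSet}
    (h : ∀ v : V, ∀ e ∈ C, v ∈ (e : Sym2 V) → ∀ e' ∈ C, v ∈ (e' : Sym2 V) → f e = f e')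
    {u v : V} (p : (cycleGraph G C).Walk u v) :
    ∀ e ∈ C, u ∈ (e : Sym2 V) → ∀ e' ∈ C, v ∈ (e' : Sym2 V) → f e = f e' := by
  induction p with
  | nil => exact h _
  | cons hadj p ih =>
    intro e he hu e' he' hv
    obtain ⟨e₁, he₁, h₁⟩ := exists_edge_of_adj G hadj
    rw [h _ e he hu e₁ he₁ (by simp [h₁])]
    exact ih e₁ he₁ (by simp [h₁]) e' he' hv

lemma localWeight_colorOf {m : ℕ} (t : ℂ) (x : Fin m → ℂ) {C : Finset G.edgeSet}
    (hC : IsMultiCycle G C) (c : (cycleGraph G C).ConnectedComponent → Fin (m + 1))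
    (hc : ∀ K, c K = Fin.last m ↔ componentEdgeCount G C K = 0) (v : V) :
    localWeight G t x (colorOf G C c) v =
      Fin.lastCases (motive := fun _ => ℂ) t x
        (c ((cycleGraph G C).connectedComponentMk v)) := by
  set K := (cycleGraph G C).connectedComponentMk v with hK
  have hinc : ∀ e ∈ C, v ∈ (e : Sym2 V) → colorOf G C c e = c K := by
    intro e he hv
    rw [colorOf, if_pos he, ecomp_eq G he hv]
  have hout : ∀ e, e ∉ C → colorOf G C c e = Fin.last m := by
    intro e he
    rw [colorOf, if_neg he]
  by_cases h0 : componentEdgeCount G C K = 0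
  · rw [(hc K).2 h0, Fin.lastCases_last, localWeight, if_pos]
    intro e he
    by_cases heC : e ∈ C
    · rw [hinc e heC (by simpa [incidentEdges] using he), (hc K).2 h0]
    · exact hout e heC
  · have hne : c K ≠ Fin.last m := fun h => h0 ((hc K).1 h)
    obtain ⟨j, hj⟩ := Fin.exists_castSucc_eq.2 hne
    have hex := (count_ne_zero G v).1 h0
    have h2 := (isMultiCycle_iff G C).1 hC v hex
    obtain ⟨e₀, he₀, hv₀⟩ := hex
    rw [← hj, Fin.lastCases_castSucc, localWeight, if_neg]
    · rw [Finset.sum_eq_single j]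
      · rw [if_pos]
        refine ⟨?_, ?_⟩
        · rw [← h2]
          congr 1
          ext e
          simp only [Finset.mem_filter, incidentEdges, Finset.mem_univ, true_and]
          constructor
          · rintro ⟨hv, h⟩
            refine ⟨?_, hv⟩
            by_contra he
            rw [hout e he] at h
            exact (Fin.castSucc_lt_last j).ne h.symm
          · rintro ⟨he, hv⟩
            exact ⟨hv, by rw [hinc e he hv, hj]⟩
        · intro e he
          by_cases heC : e ∈ C
          · left
            rw [hinc e heC (by simpa [incidentEdges] using he), hj]
          · right
            exact hout e heC
      · intro i _ hij
        rw [if_neg]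
        rintro ⟨-, h⟩
        have := h e₀ (by simp [incidentEdges, hv₀])
        rw [hinc e₀ he₀ hv₀, ← hj] at this
        rcases this with h | h
        · exact hij (Fin.castSucc_injective _ h).symm
        · exact (Fin.castSucc_lt_last j).ne h
      · simp
    · intro h
      have := h e₀ (by simp [incidentEdges, hv₀])
      rw [hinc e₀ he₀ hv₀] at this
      exact hne this

lemma prod_localWeight_colorOf {m : ℕ} (t : ℂ) (x : Fin m → ℂ) {C : Finset G.edgeSet}
    (hC : IsMultiCycle G C) (c : (cycleGraph G C).ConnectedComponent → Fin (m + 1))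
    (hc : ∀ K, c K = Fin.last m ↔ componentEdgeCount G C K = 0) :
    ∏ v, localWeight G t x (colorOf G C c) v = ∏ K, compWeight G t x C K (c K) := by
  rw [← Finset.prod_fiberwise_of_maps_to (s := Finset.univ) (t := Finset.univ)
    (g := (cycleGraph G C).connectedComponentMk) (fun _ _ => Finset.mem_univ _)]
  apply Finset.prod_congr rfl
  intro K _
  have : ∀ v ∈ Finset.univ.filter (fun v => (cycleGraph G C).connectedComponentMk v = K),
      localWeight G t x (colorOf G C c) v =
        Fin.lastCases (motive := fun _ => ℂ) t x (c K) := by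
    intro v hv
    rw [Finset.mem_filter] at hv
    rw [localWeight_colorOf G t x hC c hc, hv.2]
  rw [Finset.prod_congr rfl this, Finset.prod_const]
  change _ ^ vcount G C K = _
  unfold compWeight
  split_ifs with h h'
  · rw [h', Fin.lastCases_last]
  · exact absurd ((hc K).2 h) h'
  · obtain ⟨j, hj⟩ := Fin.exists_castSucc_eq.2 (fun h' => h ((hc K).1 h'))
    rw [← hj, Fin.lastCases_castSucc, Fin.lastCases_castSucc, vcount_eq G hC K h]

lemma compWeight_eq_zero {m : ℕ} (t : ℂ) (x : Fin m → ℂ) {C : Finset G.edgeSet}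
    (c : (cycleGraph G C).ConnectedComponent → Fin (m + 1))
    (hc : ¬ ∀ K, c K = Fin.last m ↔ componentEdgeCount G C K = 0) :
    ∏ K, compWeight G t x C K (c K) = 0 := by
  push Not at hc
  obtain ⟨K, hK⟩ := hc
  apply Finset.prod_eq_zero (Finset.mem_univ K)
  unfold compWeight
  rcases hK with ⟨h1, h2⟩ | ⟨h1, h2⟩
  · rw [if_neg h2, h1, Fin.lastCases_last]
  · rw [if_pos h2, if_neg h1]

lemma sum_fiber {m : ℕ} (t : ℂ) (x : Fin m → ℂ) {C : Finset G.edgeSet}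
    (hC : IsMultiCycle G C) :
    ∑ f ∈ Finset.univ.filter (fun f : G.edgeSet → Fin (m + 1) =>
        Finset.univ.filter (fun e => f e ≠ Fin.last m) = C),
      ∏ v, localWeight G t x f v =
    ∑ c : (cycleGraph G C).ConnectedComponent → Fin (m + 1),
      ∏ K, compWeight G t x C K (c K) := by
  rw [← Finset.sum_filter_of_ne (s := Finset.univ)
    (p := fun c : (cycleGraph G C).ConnectedComponent → Fin (m + 1) =>
      ∀ K, c K = Fin.last m ↔ componentEdgeCount G C K = 0)
    (fun c _ h => by
      by_contra hc
      exact h (compWeight_eq_zero G t x c hc))]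
  symm
  have hex : ∀ K, componentEdgeCount G C K ≠ 0 → ∃ e ∈ C, ecomp G C e = K := by
    intro K hK
    rw [count_eq, Finset.card_ne_zero] at hK
    obtain ⟨e, he⟩ := hK
    exact ⟨e, (Finset.mem_filter.1 he)⟩
  have hpos : ∀ e ∈ C, componentEdgeCount G C (ecomp G C e) ≠ 0 := by
    intro e he
    rw [count_eq, Finset.card_ne_zero]
    exact ⟨e, Finset.mem_filter.2 ⟨he, rfl⟩⟩
  apply Finset.sum_of_injOn (colorOf G C)
  · intro c hc c' hc' h
    simp only [Finset.coe_filter, Finset.mem_univ, true_and, Set.mem_ofPred_eq] at hc hc'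
    funext K
    by_cases h0 : componentEdgeCount G C K = 0
    · rw [(hc K).2 h0, (hc' K).2 h0]
    · obtain ⟨e, he, rfl⟩ := hex K h0
      have := congrFun h e
      simpa [colorOf, he] using this
  · intro c hc
    simp only [Finset.coe_filter, Finset.mem_univ, true_and, Set.mem_ofPred_eq] at hc ⊢
    ext e
    rw [Finset.mem_filter]
    simp only [Finset.mem_univ, true_and, colorOf]
    by_cases he : e ∈ C
    · simp only [he, if_true, iff_true]
      intro h
      exact hpos e he ((hc _).1 h)
    · simp [he]
  · intro f hf hnot
    by_contra hne
    apply hnot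
    simp only [Finset.mem_filter, Finset.mem_univ, true_and] at hf
    have hf' : ∀ e, e ∈ C ↔ f e ≠ Fin.last m := by
      intro e
      rw [← hf]; simp
    have hv := fun v => (Finset.prod_ne_zero_iff.1 hne) v (Finset.mem_univ v)
    have hloc : ∀ v : V, ∀ e ∈ C, v ∈ (e : Sym2 V) → ∀ e' ∈ C, v ∈ (e' : Sym2 V) →
        f e = f e' := by
      intro v e he hve
      exact (localWeight_ne_zero G (hv v) hf' ⟨e, he, hve⟩).2 e he hve
    have hcon : ∀ e ∈ C, ∀ e' ∈ C, ecomp G C e = ecomp G C e' → f e = f e' := by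
      intro e he e' he' h
      obtain ⟨p⟩ := SimpleGraph.ConnectedComponent.eq.1 h
      exact const_of_walk G hloc p e he (Sym2.out_fst_mem _) e' he' (Sym2.out_fst_mem _)
    refine ⟨fun K => if h : componentEdgeCount G C K ≠ 0 then f (hex K h).choose
      else Fin.last m, ?_, ?_⟩
    · simp only [Finset.coe_filter, Finset.mem_univ, true_and, Set.mem_ofPred_eq]
      intro K
      by_cases h : componentEdgeCount G C K ≠ 0
      · rw [dif_pos h]
        have := (hf' _).1 (hex K h).choose_spec.1
        exact ⟨fun h' => absurd h' this, fun h' => absurd h' h⟩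
      · rw [dif_neg h]
        simpa using h
    · funext e
      by_cases he : e ∈ C
      · rw [colorOf, if_pos he, dif_pos (hpos e he)]
        have hs := (hex _ (hpos e he)).choose_spec
        exact hcon _ hs.1 _ he hs.2
      · rw [colorOf, if_neg he]
        by_contra h
        exact he ((hf' e).2 (Ne.symm h))
  · intro c hc
    simp only [Finset.mem_filter, Finset.mem_univ, true_and] at hc
    exact (prod_localWeight_colorOf G t x hC c hc).symm

lemma sum_fiber_zero {m : ℕ} (t : ℂ) (x : Fin m → ℂ) {C : Finset G.edgeSet}
    (hC : ¬ IsMultiCycle G C) :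
    ∑ f ∈ Finset.univ.filter (fun f : G.edgeSet → Fin (m + 1) =>
        Finset.univ.filter (fun e => f e ≠ Fin.last m) = C),
      ∏ v, localWeight G t x f v = 0 := by
  apply Finset.sum_eq_zero
  intro f hf
  by_contra hne
  apply hC
  rw [isMultiCycle_iff]
  intro v hv
  simp only [Finset.mem_filter, Finset.mem_univ, true_and] at hf
  refine (localWeight_ne_zero G ((Finset.prod_ne_zero_iff.1 hne) v (Finset.mem_univ v))
    ?_ hv).1
  intro e
  rw [← hf]; simp

lemma lhs_eq {m : ℕ} (t : ℂ) (x : Fin m → ℂ) :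
    (∑ f : G.edgeSet → Fin (m + 1), ∏ v : V, localWeight G t x f v) =
    ∑ C : Finset G.edgeSet, if IsMultiCycle G C then t ^ (Fintype.card V - C.card) *
      ((cycleType G C).map (fun j => ∑ i : Fin m, x i ^ j)).prod else 0 := by
  rw [← Finset.sum_fiberwise_of_maps_to (s := Finset.univ) (t := Finset.univ)
    (g := fun f : G.edgeSet → Fin (m + 1) =>
      Finset.univ.filter (fun e => f e ≠ Fin.last m)) (fun _ _ => Finset.mem_univ _)]
  apply Finset.sum_congr rfl
  intro C _
  split_ifs with h
  · rw [← sum_prod_compWeight G t x h, ← sum_fiber G t x h]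
  · exact sum_fiber_zero G t x h

lemma rhs_term {C : Finset G.edgeSet} (hC : IsMultiCycle G C) (g : ℕ → Multiset ℕ → ℂ) :
    ∑ k ∈ Finset.range (Fintype.card V + 1), ∑ lam : Nat.Partition k,
      (if cycleType G C = lam.parts then g k lam.parts else 0) =
    g C.card (cycleType G C) := by
  have hle : C.card ≤ Fintype.card V := by
    have := card_add G hC
    omega
  rw [Finset.sum_eq_single C.card]
  · let lam₀ : Nat.Partition C.card :=
      ⟨cycleType G C, fun {i} hi => by
        have := (Multiset.mem_filter.1 hi).2
        omega, cycleType_sum G C⟩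
    rw [Finset.sum_eq_single lam₀]
    · simp [lam₀]
    · intro lam _ hne
      rw [if_neg]
      intro h
      exact hne (Nat.Partition.ext h.symm)
    · simp
  · intro k _ hk
    apply Finset.sum_eq_zero
    intro lam _
    rw [if_neg]
    intro h
    apply hk
    rw [← cycleType_sum G C, h, lam.parts_sum]
  · intro h
    exact absurd (Finset.mem_range.2 (by omega)) h

end ZografAux

/-- Theorem 2 of Zograf's paper: with `r = m + 1 ≥ 2` colors and the weights
`localWeight`, the state sum `Σ_f Π_v w_v(f)` equals
`Σ_{|λ| ≤ n} t^{n-|λ|} p_λ(x_1, …, x_{r-1}) N_λ(G)`. -/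
theorem state_sum_eq_cycle_generating_function
    {V : Type*} [Fintype V] [DecidableEq V] (G : SimpleGraph V)
    (m : ℕ) (hm : 1 ≤ m) (t : ℂ) (x : Fin m → ℂ) :
    (∑ f : G.edgeSet → Fin (m + 1), ∏ v : V, localWeight G t x f v) =
    ∑ k ∈ Finset.range (Fintype.card V + 1), ∑ lam : Nat.Partition k,
      t ^ (Fintype.card V - k) *
        ((lam.parts.map (fun j => ∑ i : Fin m, x i ^ j)).prod) *
        (cycleCount G lam : ℂ) := by
  rw [ZografAux.lhs_eq]
  have hR : ∀ k : ℕ, ∀ lam : Nat.Partition k,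
      t ^ (Fintype.card V - k) *
        ((lam.parts.map (fun j => ∑ i : Fin m, x i ^ j)).prod) *
        (cycleCount G lam : ℂ) =
      ∑ C : Finset G.edgeSet, if IsMultiCycle G C then
        (if cycleType G C = lam.parts then t ^ (Fintype.card V - k) *
        ((lam.parts.map (fun j => ∑ i : Fin m, x i ^ j)).prod) else 0) else 0 := by
    intro k lam
    simp_rw [← ite_and]
    rw [← Finset.sum_filter, Finset.sum_const, nsmul_eq_mul, mul_comm, cycleCount]
  simp_rw [hR]
  rw [Finset.sum_congr rfl (fun k _ => Finset.sum_comm), Finset.sum_comm]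
  apply Finset.sum_congr rfl
  intro C _
  split_ifs with h
  · exact (ZografAux.rhs_term G h (fun k p => t ^ (Fintype.card V - k) *
      ((p.map (fun j => ∑ i : Fin m, x i ^ j)).prod))).symm
  · simp
end

section
/- Let G be a finite simple graph with n vertices, let r ≥ 2 be an integer, let t, x_1, …, x_{r−1} be complex numbers, and let C be a fixed cycle in G with connected components C_1, …, C_l. Then Σ_f Π_{v ∈ V} w_v(f) = t^{n−|C|} · Π_{j=1}^{l} p_{|C_j|}(x_1, …, x_{r−1}), where the sum runs over all f : E → Fin r such that f(e) = r for every edge e not in C and f(e) ≠ r for every edge e in C. -/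
open scoped Classical

theorem lift_eq {V : Type*} [Fintype V] [DecidableEq V] {G : SimpleGraph V} (C : Finset G.edgeSet) :
  (do let a ← C; pure (a : Sym2 V) : Finset (Sym2 V)) = C.map (Function.Embedding.subtype _) := by
  ext e
  simp

theorem mc_iff {V : Type*} [Fintype V] [DecidableEq V] {G : SimpleGraph V} {C : Finset G.edgeSet} (hC : IsMultiCycle G C) (v : V) (h : ∃ e ∈ C, v ∈ (e : Sym2 V)) :
    (Finset.filter (fun e : G.edgeSet => v ∈ (e : Sym2 V)) C).card = 2 := by
  have := hC v h
  rw [lift_eq, Finset.filter_map, Finset.card_map] at this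
  exact this

theorem cnt_eq {V : Type*} [Fintype V] [DecidableEq V] {G : SimpleGraph V} {C : Finset G.edgeSet}
    (K : (cycleGraph G C).ConnectedComponent) : componentEdgeCount G C K =
  (Finset.filter (fun e : G.edgeSet => ∀ v ∈ (e : Sym2 V),
    (cycleGraph G C).connectedComponentMk v = K) C).card := by
  unfold componentEdgeCount
  rw [lift_eq, Finset.filter_map, Finset.card_map]
  rfl

theorem cg_adj {V : Type*} [Fintype V] [DecidableEq V] {G : SimpleGraph V} {C : Finset G.edgeSet}
    (u v : V) : (cycleGraph G C).Adj u v ↔ (∃ e ∈ C, (e : Sym2 V) = s(u, v)) ∧ u ≠ v := by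
  unfold cycleGraph
  rw [SimpleGraph.fromEdgeSet_adj, lift_eq]
  simp

section Helpers

variable {V : Type*} [Fintype V] [DecidableEq V] {G : SimpleGraph V} {C : Finset G.edgeSet}

/-- `v` is incident to an edge of `C`. -/
def Cov (C : Finset G.edgeSet) (v : V) : Prop := ∃ e ∈ C, v ∈ (e : Sym2 V)

theorem comp_eq_of_mem {e : G.edgeSet} (he : e ∈ C) {u v : V}
    (hu : u ∈ (e : Sym2 V)) (hv : v ∈ (e : Sym2 V)) :
    (cycleGraph G C).connectedComponentMk u = (cycleGraph G C).connectedComponentMk v := by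
  by_cases huv : u = v
  · rw [huv]
  · apply SimpleGraph.ConnectedComponent.sound
    apply SimpleGraph.Adj.reachable
    have h : (e : Sym2 V) = s(u, v) := (Sym2.mem_and_mem_iff huv).1 ⟨hu, hv⟩
    exact (cg_adj u v).2 ⟨⟨e, he, h⟩, huv⟩

theorem card_vertices_eq (hC : IsMultiCycle G C) (D : Finset G.edgeSet) (A : Finset V)
    (hDC : D ⊆ C) (hA : ∀ v ∈ A, Cov C v)
    (h : ∀ e ∈ C, ∀ v ∈ (e : Sym2 V), (e ∈ D ↔ v ∈ A)) : A.card = D.card := by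
  have key := Finset.sum_card_bipartiteAbove_eq_sum_card_bipartiteBelow
    (s := A) (t := D) (fun (v : V) (e : G.edgeSet) => v ∈ (e : Sym2 V))
  have h1 : ∀ v ∈ A, (Finset.bipartiteAbove
      (fun (v : V) (e : G.edgeSet) => v ∈ (e : Sym2 V)) D v).card = 2 := by
    intro v hv
    rw [← mc_iff hC v (hA v hv)]
    congr 1
    ext e
    simp only [Finset.mem_bipartiteAbove, Finset.mem_filter]
    constructor
    · rintro ⟨a, b⟩
      exact ⟨hDC a, b⟩
    · rintro ⟨a, b⟩
      exact ⟨(h e a v b).2 hv, b⟩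
  have h2 : ∀ e ∈ D, (Finset.bipartiteBelow
      (fun (v : V) (e : G.edgeSet) => v ∈ (e : Sym2 V)) A e).card = 2 := by
    rintro ⟨e, heG⟩ he
    induction e using Sym2.ind with
    | _ a b =>
    have hab : a ≠ b := G.ne_of_adj heG
    rw [← Finset.card_pair hab]
    congr 1
    ext v
    simp only [Finset.mem_bipartiteBelow, Finset.mem_insert, Finset.mem_singleton,
      Sym2.mem_iff]
    constructor
    · exact fun h => h.2
    · intro hv
      exact ⟨(h _ (hDC he) v (by simpa using hv)).1 he, hv⟩
  rw [Finset.sum_congr rfl h1, Finset.sum_congr rfl h2] at key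
  simpa using key

theorem count_ne_zero {e : G.edgeSet} (he : e ∈ C) {v : V} (hv : v ∈ (e : Sym2 V)) :
    componentEdgeCount G C ((cycleGraph G C).connectedComponentMk v) ≠ 0 := by
  rw [cnt_eq, Finset.card_ne_zero]
  exact ⟨e, Finset.mem_filter.2 ⟨he, fun u hu => comp_eq_of_mem he hu hv⟩⟩

theorem exists_edge {K : (cycleGraph G C).ConnectedComponent}
    (hK : componentEdgeCount G C K ≠ 0) :
    ∃ e ∈ C, ∀ v ∈ (e : Sym2 V), (cycleGraph G C).connectedComponentMk v = K := by
  rw [cnt_eq, Finset.card_ne_zero] at hK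
  obtain ⟨e, he⟩ := hK
  rw [Finset.mem_filter] at he
  exact ⟨e, he.1, he.2⟩

theorem const_of_reachable {α : Type*} (f : G.edgeSet → α)
    (hf : ∀ v : V, ∀ e ∈ C, ∀ e' ∈ C, v ∈ (e : Sym2 V) → v ∈ (e' : Sym2 V) → f e = f e')
    {u v : V} (p : (cycleGraph G C).Walk u v) :
    ∀ e ∈ C, ∀ e' ∈ C, u ∈ (e : Sym2 V) → v ∈ (e' : Sym2 V) → f e = f e' := by
  induction p with
  | nil => exact hf _
  | @cons u w v hadj p ih =>
    intro e he e' he' hu hv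
    obtain ⟨⟨e0, h0, h0e⟩, -⟩ := (cg_adj u w).1 hadj
    have h1 : u ∈ (e0 : Sym2 V) := by rw [h0e]; simp
    have h2 : w ∈ (e0 : Sym2 V) := by rw [h0e]; simp
    exact (hf u e he e0 h0 hu h1).trans (ih e0 h0 e' he' h2 hv)

theorem edge_eq_of_weight {m : ℕ} {t : ℂ} {x : Fin m → ℂ} {f : G.edgeSet → Fin (m + 1)}
    (hf : ∀ e : G.edgeSet, e ∈ C ↔ f e ≠ Fin.last m) {v : V}
    (hw : localWeight G t x f v ≠ 0) :
    ∀ e ∈ C, ∀ e' ∈ C, v ∈ (e : Sym2 V) → v ∈ (e' : Sym2 V) → f e = f e' := by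
  intro e he e' he' hv hv'
  have m1 : e ∈ incidentEdges G v := by simp [incidentEdges, hv]
  have m2 : e' ∈ incidentEdges G v := by simp [incidentEdges, hv']
  unfold localWeight at hw
  rw [if_neg (fun h => (hf e).1 he (h e m1))] at hw
  obtain ⟨i, -, hi⟩ := Finset.exists_ne_zero_of_sum_ne_zero hw
  rw [ne_eq, ite_eq_right_iff, Classical.not_imp] at hi
  obtain ⟨⟨-, hi⟩, -⟩ := hi
  rw [(hi e m1).resolve_right ((hf e).1 he), (hi e' m2).resolve_right ((hf e').1 he')]

/-- The coloring attached to a coloring of the components. -/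
noncomputable def colorOf {m : ℕ} (g : (cycleGraph G C).ConnectedComponent → Fin m)
    (e : G.edgeSet) : Fin (m + 1) :=
  if e ∈ C then (g ((cycleGraph G C).connectedComponentMk (e : Sym2 V).out.1)).castSucc
  else Fin.last m

theorem colorOf_mem {m : ℕ} (g : (cycleGraph G C).ConnectedComponent → Fin m)
    {e : G.edgeSet} (he : e ∈ C) {v : V} (hv : v ∈ (e : Sym2 V)) :
    colorOf g e = (g ((cycleGraph G C).connectedComponentMk v)).castSucc := by
  rw [colorOf, if_pos he, comp_eq_of_mem he (Sym2.out_fst_mem _) hv]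

theorem colorOf_iff {m : ℕ} (g : (cycleGraph G C).ConnectedComponent → Fin m)
    (e : G.edgeSet) : e ∈ C ↔ colorOf g e ≠ Fin.last m := by
  unfold colorOf
  split_ifs with h
  · simp [h, Fin.castSucc_ne_last]
  · simp [h]

theorem weight_colorOf (hC : IsMultiCycle G C) {m : ℕ} (t : ℂ) (x : Fin m → ℂ)
    (g : (cycleGraph G C).ConnectedComponent → Fin m) (v : V) :
    localWeight G t x (colorOf g) v =
      if Cov C v then x (g ((cycleGraph G C).connectedComponentMk v)) else t := by
  have hinc : ∀ e, e ∈ incidentEdges G v ↔ v ∈ (e : Sym2 V) := by simp [incidentEdges]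
  unfold localWeight
  split_ifs with h1 h2 h2
  · obtain ⟨e, he, hv⟩ := h2
    exact absurd (h1 e ((hinc e).2 hv)) ((colorOf_iff g e).1 he)
  · rfl
  · rw [Finset.sum_eq_single (g ((cycleGraph G C).connectedComponentMk v))]
    · rw [if_pos]
      constructor
      · rw [← mc_iff hC v h2]
        congr 1
        ext e
        simp only [Finset.mem_filter, hinc]
        constructor
        · rintro ⟨a, b⟩
          refine ⟨(colorOf_iff g e).2 ?_, a⟩
          rw [b]
          exact Fin.castSucc_ne_last _
        · rintro ⟨a, b⟩
          exact ⟨b, colorOf_mem g a b⟩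
      · intro e he
        by_cases hc : e ∈ C
        · exact Or.inl (colorOf_mem g hc ((hinc e).1 he))
        · right
          simp [colorOf, hc]
    · intro i _ hi
      rw [if_neg]
      rintro ⟨-, h⟩
      obtain ⟨e, he, hv⟩ := h2
      have := (h e ((hinc e).2 hv)).resolve_right ((colorOf_iff g e).1 he)
      rw [colorOf_mem g he hv] at this
      exact hi (Fin.castSucc_injective _ this).symm
    · simp
  · exfalso
    apply h1
    intro e he
    have : e ∉ C := fun hc => h2 ⟨e, hc, (hinc e).1 he⟩
    simp [colorOf, this]

theorem prod_weight_colorOf (hC : IsMultiCycle G C) {m : ℕ} (t : ℂ) (x : Fin m → ℂ)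
    (g : (cycleGraph G C).ConnectedComponent → Fin m) :
    ∏ v : V, localWeight G t x (colorOf g) v =
      t ^ (Fintype.card V - C.card) *
        ∏ K : {K : (cycleGraph G C).ConnectedComponent // componentEdgeCount G C K ≠ 0},
          x (g K.1) ^ componentEdgeCount G C K.1 := by
  have hcard : (Finset.univ.filter (fun v : V => Cov C v)).card = C.card := by
    apply card_vertices_eq hC C _ (Finset.Subset.refl _)
    · intro v hv
      exact (Finset.mem_filter.1 hv).2
    · intro e he v hv
      simp only [he, Finset.mem_filter, Finset.mem_univ, true_and, true_iff]
      exact ⟨e, he, hv⟩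
  have hcardK : ∀ K : (cycleGraph G C).ConnectedComponent,
      (Finset.univ.filter (fun v : V => Cov C v ∧
        (cycleGraph G C).connectedComponentMk v = K)).card = componentEdgeCount G C K := by
    intro K
    rw [cnt_eq]
    apply card_vertices_eq hC _ _ (Finset.filter_subset _ _)
    · intro v hv
      exact (Finset.mem_filter.1 hv).2.1
    · intro e he v hv
      simp only [he, Finset.mem_filter, Finset.mem_univ, true_and]
      constructor
      · intro h
        exact ⟨⟨e, he, hv⟩, h v hv⟩
      · rintro ⟨-, h⟩ u hu
        rw [← h]
        exact comp_eq_of_mem he hu hv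
  simp_rw [weight_colorOf hC]
  rw [Finset.prod_ite, Finset.prod_const, mul_comm]
  congr 1
  · congr 1
    rw [← hcard, Finset.filter_not, Finset.card_sdiff_of_subset (Finset.filter_subset _ _),
      Finset.card_univ]
  · rw [← Finset.prod_fiberwise (Finset.univ.filter (fun v : V => Cov C v))
      (fun v => (cycleGraph G C).connectedComponentMk v)]
    have : ∀ K : (cycleGraph G C).ConnectedComponent,
        ∏ v ∈ (Finset.univ.filter (fun v : V => Cov C v)).filter
          (fun v => (cycleGraph G C).connectedComponentMk v = K),
          x (g ((cycleGraph G C).connectedComponentMk v)) =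
        x (g K) ^ componentEdgeCount G C K := by
      intro K
      rw [← hcardK K, Finset.filter_filter, ← Finset.prod_const]
      apply Finset.prod_congr rfl
      intro v hv
      rw [(Finset.mem_filter.1 hv).2.2]
    rw [Finset.prod_congr rfl (fun K _ => this K)]
    rw [← Finset.prod_subtype (Finset.univ.filter
      (fun K => componentEdgeCount G C K ≠ 0)) (by simp)
      (fun K => x (g K) ^ componentEdgeCount G C K)]
    symm
    apply Finset.prod_subset (Finset.filter_subset _ _)
    intro K _ hK
    have : componentEdgeCount G C K = 0 := by simpa using hK
    simp [this]

end Helpers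

/-- For a fixed cycle `C` in `G`, the partial state sum over the colorings
`f : E → Fin r` (with `r = m + 1 ≥ 2` colors) that give the last color exactly to the
edges not in `C` equals `t^{n-|C|} Π_j p_{|C_j|}(x_1, …, x_{r-1})`, the product running
over the connected components `C_j` of `C`. -/
theorem partial_state_sum_over_cycle
    {V : Type*} [Fintype V] [DecidableEq V] (G : SimpleGraph V)
    (m : ℕ) (hm : 1 ≤ m) (t : ℂ) (x : Fin m → ℂ)
    (C : Finset G.edgeSet) (hC : IsMultiCycle G C) :
    (∑ f ∈ Finset.univ.filter (fun f : G.edgeSet → Fin (m + 1) =>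
        ∀ e : G.edgeSet, e ∈ C ↔ f e ≠ Fin.last m),
      ∏ v : V, localWeight G t x f v) =
    t ^ (Fintype.card V - C.card) *
      ((cycleType G C).map (fun k => ∑ i : Fin m, x i ^ k)).prod := by
  let K' := {K : (cycleGraph G C).ConnectedComponent // componentEdgeCount G C K ≠ 0}
  let ext : (K' → Fin m) → (cycleGraph G C).ConnectedComponent → Fin m :=
    fun g K => if h : componentEdgeCount G C K ≠ 0 then g ⟨K, h⟩ else ⟨0, hm⟩
  have hext : ∀ g (K : K'), ext g K.1 = g K := by
    intro g K
    exact dif_pos K.2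
  have hR : ((cycleType G C).map (fun k => ∑ i : Fin m, x i ^ k)).prod =
      ∑ g : K' → Fin m, ∏ K : K', x (g K) ^ componentEdgeCount G C K.1 := by
    rw [← Fintype.piFinset_univ, ← Finset.prod_univ_sum (fun _ => Finset.univ)
      (fun (K : K') (i : Fin m) => x i ^ componentEdgeCount G C K.1)]
    unfold cycleType
    rw [Multiset.filter_map, Multiset.map_map]
    symm
    exact (Finset.prod_subtype (Finset.univ.filter
      (fun K => componentEdgeCount G C K ≠ 0)) (by simp)
      (fun K => ∑ i : Fin m, x i ^ componentEdgeCount G C K)).symm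
  rw [hR, Finset.mul_sum]
  symm
  apply Finset.sum_of_injOn (fun g => colorOf (ext g))
  · intro g _ g' _ h
    funext K
    obtain ⟨e, he, hK⟩ := exists_edge K.2
    have h1 := congrFun h e
    simp only at h1
    rw [colorOf_mem _ he (Sym2.out_fst_mem _), colorOf_mem _ he (Sym2.out_fst_mem _),
      hK _ (Sym2.out_fst_mem _), hext, hext] at h1
    exact Fin.castSucc_injective _ h1
  · intro g _
    simp only [Finset.coe_filter, Finset.mem_univ, true_and, Set.mem_ofPred_eq]
    exact colorOf_iff _
  · intro f hf hnot
    have hf' := (Finset.mem_filter.1 hf).2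
    by_contra hne
    rw [← ne_eq, Finset.prod_ne_zero_iff] at hne
    apply hnot
    have hv := fun v => edge_eq_of_weight hf' (hne v (Finset.mem_univ v))
    choose E hE hEK using fun K : K' => exists_edge K.2
    refine ⟨fun K => (f (E K)).castPred ((hf' _).1 (hE K)), by simp, ?_⟩
    funext e
    by_cases he : e ∈ C
    · have hu := Sym2.out_fst_mem (e : Sym2 V)
      have hc := count_ne_zero he hu
      simp only
      rw [colorOf_mem _ he hu]
      refine (congrArg Fin.castSucc (hext (fun K => (f (E K)).castPred ((hf' _).1 (hE K))) ⟨_, hc⟩)).trans ?_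
      rw [Fin.castSucc_castPred]
      have hw := hEK ⟨_, hc⟩ _ (Sym2.out_fst_mem _)
      obtain ⟨p⟩ := SimpleGraph.ConnectedComponent.exact hw
      exact const_of_reachable f hv p _ (hE _) _ he (Sym2.out_fst_mem _) hu
    · have h1 : f e = Fin.last m := by
        by_contra h
        exact he ((hf' e).2 h)
      simp [colorOf, he, h1]
  · intro g _
    rw [prod_weight_colorOf hC]
    simp only [hext]
    rfl
end
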